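/- Let occ(σ) be the number of occurrences in σ of the mesh pattern Nr. 19, where an occurrence is a pair of indices i < j with a = σ_i < σ_j = b such that: every element before position i has value less than a; every element strictly between positions i and j has value less than a; and every element after position j has value strictly between a and b. Let E(t,u) = Σ_{n≥0} t^n Σ_{σ∈K_n} u^{occ(σ)}. Then (1+t)·E(t,u) = ((1+t)(1+t−ut) − t(1−u)·A(t))·A(t) as formal power series in t over ℚ[u]. -/

import Mathlib

/-- A permutation of `{0, …, n-1}` is a *king permutation* if consecutive entries
differ by more than 1 in absolute value. -/
def IsKing {n : ℕ} (σ : Equiv.Perm (Fin n)) : Prop :=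
  ∀ i : Fin n, ∀ h : (i : ℕ) + 1 < n,
    1 < |((σ ⟨(i : ℕ) + 1, h⟩ : ℕ) : ℤ) - ((σ i : ℕ) : ℤ)|

/-- `kingCount n = A_n`, the number of king permutations of length `n`. -/
noncomputable def kingCount (n : ℕ) : ℕ :=
  Nat.card {σ : Equiv.Perm (Fin n) // IsKing σ}

/-- `A(t)` regarded as a power series over `ℚ[u]` (constant-polynomial coefficients). -/
noncomputable def kingAu : PowerSeries (Polynomial ℚ) :=
  PowerSeries.mk fun n => (kingCount n : Polynomial ℚ)

/-- `u` viewed as a constant power series over `ℚ[u]`. -/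
noncomputable def U : PowerSeries (Polynomial ℚ) :=
  PowerSeries.C (R := Polynomial ℚ) Polynomial.X

/-- `t`, the power series variable. -/
noncomputable def T : PowerSeries (Polynomial ℚ) :=
  PowerSeries.X

/-- An occurrence of the mesh pattern Nr. 19 in `σ`. -/
def OccP {n : ℕ} (σ : Equiv.Perm (Fin n)) (i j : Fin n) : Prop :=
  i < j ∧ σ i < σ j ∧
    (∀ k : Fin n, k < i → σ k < σ i) ∧
    (∀ k : Fin n, i < k → k < j → σ k < σ i) ∧
    (∀ k : Fin n, j < k → σ i < σ k ∧ σ k < σ j)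

/-- The number of occurrences of the mesh pattern Nr. 19 in `σ`. -/
noncomputable def occP {n : ℕ} (σ : Equiv.Perm (Fin n)) : ℕ :=
  Nat.card {p : Fin n × Fin n // OccP σ p.1 p.2}

-- `E(t,u) = Σ_{n≥0} t^n Σ_{σ∈K_n} u^{occ(σ)}`, a power series in `t` over `ℚ[u]`.
open Classical in
noncomputable def Etu : PowerSeries (Polynomial ℚ) :=
  PowerSeries.mk fun n =>
    ∑ σ : Equiv.Perm (Fin n),
      if IsKing σ then (Polynomial.X : Polynomial ℚ) ^ occP σ else 0

theorem isKing_iff {n : ℕ} (σ : Equiv.Perm (Fin n)) : IsKing σ ↔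
    ∀ k (h : k + 1 < n), (σ ⟨k, by omega⟩ : ℕ) + 1 < (σ ⟨k+1, h⟩ : ℕ) ∨
      (σ ⟨k+1, h⟩ : ℕ) + 1 < (σ ⟨k, by omega⟩ : ℕ) := by
  constructor
  · intro H k h
    have := H ⟨k, by omega⟩ h
    rw [lt_abs] at this
    simp only at this
    omega
  · intro H i h
    have := H i h
    rw [lt_abs]
    simp only [Fin.eta] at this
    omega

/-- the first entry is the maximum -/
def StartsMax {n : ℕ} (σ : Equiv.Perm (Fin n)) : Prop :=
  ∃ h : 0 < n, (σ ⟨0, h⟩ : ℕ) + 1 = n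

/-- the last entry is the maximum -/
def EndsMax {n : ℕ} (σ : Equiv.Perm (Fin n)) : Prop :=
  ∃ h : 0 < n, (σ ⟨n - 1, by omega⟩ : ℕ) + 1 = n

noncomputable def startCount (n : ℕ) : ℕ :=
  Nat.card {σ : Equiv.Perm (Fin n) // IsKing σ ∧ StartsMax σ}

theorem startCount_zero : startCount 0 = 0 := by
  unfold startCount
  rw [Nat.card_eq_zero]
  left
  constructor
  rintro ⟨σ, -, h, -⟩
  omega

/-- prepend a new maximum -/
def consMax {m : ℕ} (τ : Equiv.Perm (Fin m)) : Equiv.Perm (Fin (m + 1)) :=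
  (Equiv.Perm.decomposeFin.symm (0, τ)).trans (finRotate (m + 1)).symm

theorem consMax_zero {m : ℕ} (τ : Equiv.Perm (Fin m)) : consMax τ 0 = Fin.last m := by
  simp only [consMax, Equiv.trans_apply, Equiv.symm_apply_eq]
  simp

theorem consMax_succ {m : ℕ} (τ : Equiv.Perm (Fin m)) (i : Fin m) :
    consMax τ i.succ = (τ i).castSucc := by
  simp only [consMax, Equiv.trans_apply, Equiv.symm_apply_eq]
  simp

theorem consMax_injective {m : ℕ} : Function.Injective (consMax (m := m)) := by
  intro τ τ' h
  ext i
  have := congrArg (fun s => (s i.succ : ℕ)) h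
  simpa [consMax_succ] using this

theorem exists_consMax {m : ℕ} (σ : Equiv.Perm (Fin (m + 1))) (h : σ 0 = Fin.last m) :
    ∃ τ, consMax τ = σ := by
  obtain ⟨⟨p, τ⟩, hp⟩ := Equiv.Perm.decomposeFin.symm.surjective (σ.trans (finRotate (m + 1)))
  have h0 : p = 0 := by
    have := congrArg (fun s => s 0) hp
    simpa [h] using this
  subst h0
  refine ⟨τ, ?_⟩
  unfold consMax
  rw [hp]
  ext i
  simp

theorem king_consMax {m : ℕ} (τ : Equiv.Perm (Fin m)) :
    IsKing (consMax τ) ↔ IsKing τ ∧ ¬ StartsMax τ := by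
  have hs : ∀ k (h : k < m), (consMax τ ⟨k + 1, by omega⟩ : ℕ) = τ ⟨k, h⟩ := by
    intro k h
    have := consMax_succ τ ⟨k, h⟩
    have h2 := congrArg Fin.val this
    simpa using h2
  have h0 : (consMax τ ⟨0, by omega⟩ : ℕ) = m := by
    have := congrArg Fin.val (consMax_zero τ)
    simpa using this
  rw [isKing_iff, isKing_iff]
  constructor
  · intro H
    refine ⟨fun k h => ?_, ?_⟩
    · have := H (k + 1) (by omega)
      rwa [hs k (by omega), hs (k + 1) h] at this
    · rintro ⟨hm, h⟩
      have := H 0 (by omega)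
      rw [h0, hs 0 hm] at this
      omega
  · rintro ⟨H, hn⟩ k h
    rcases k with _ | k
    · rw [h0, hs 0 (by omega)]
      right
      have h1 := (τ ⟨0, by omega⟩).isLt
      have h2 : (τ ⟨0, by omega⟩ : ℕ) + 1 ≠ m := fun h3 => hn ⟨by omega, h3⟩
      omega
    · rw [hs k (by omega), hs (k + 1) (by omega)]
      exact H k (by omega)

theorem startCount_succ (m : ℕ) : startCount (m + 1) + startCount m = kingCount m := by
  classical
  have h1 : startCount (m + 1) = Nat.card {τ : Equiv.Perm (Fin m) // IsKing τ ∧ ¬ StartsMax τ} := by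
    symm
    unfold startCount
    refine Nat.card_congr (Equiv.ofBijective (fun τ => ⟨consMax τ.1, (king_consMax _).2 τ.2, ?_⟩) ⟨?_, ?_⟩)
    · refine ⟨by omega, ?_⟩
      have := congrArg Fin.val (consMax_zero τ.1)
      simpa using this
    · intro a b hab
      exact Subtype.ext (consMax_injective (congrArg Subtype.val hab))
    · rintro ⟨σ, hk, h, hm⟩
      obtain ⟨τ, rfl⟩ := exists_consMax σ (by
        ext
        have : (⟨0, h⟩ : Fin (m + 1)) = 0 := rfl
        rw [this] at hm
        simpa using hm)
      exact ⟨⟨τ, (king_consMax _).1 hk⟩, rfl⟩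
  rw [h1]
  unfold startCount kingCount
  simp only [Nat.card_eq_fintype_card, Fintype.card_subtype]
  rw [add_comm, ← Finset.filter_filter, ← Finset.filter_filter,
    Finset.card_filter_add_card_filter_not]

theorem king_rev {n : ℕ} (σ : Equiv.Perm (Fin n)) (H : IsKing σ) :
    IsKing (Fin.revPerm.trans σ) := by
  rw [isKing_iff] at H ⊢
  intro k h
  have := H (n - (k + 2)) (by omega)
  simp only [Equiv.trans_apply, Fin.revPerm_apply, Fin.rev]
  have e : n - (k + 2) + 1 = n - (k + 1) := by omega
  have e' : n - (k + 1 + 1) = n - (k + 2) := by omega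
  simp only [e] at this
  simp only [e']
  exact this.symm

theorem card_ends (n : ℕ) :
    Nat.card {σ : Equiv.Perm (Fin n) // IsKing σ ∧ EndsMax σ} = startCount n := by
  unfold startCount
  have hinv : ∀ σ : Equiv.Perm (Fin n), Fin.revPerm.trans (Fin.revPerm.trans σ) = σ := by
    intro σ
    ext i
    simp
  refine Nat.card_congr
    { toFun := fun σ => ⟨Fin.revPerm.trans σ.1, king_rev _ σ.2.1, ?_⟩
      invFun := fun σ => ⟨Fin.revPerm.trans σ.1, king_rev _ σ.2.1, ?_⟩
      left_inv := fun σ => Subtype.ext (hinv _)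
      right_inv := fun σ => Subtype.ext (hinv _) }
  · obtain ⟨h, h2⟩ := σ.2.2
    refine ⟨h, ?_⟩
    simpa [Fin.rev] using h2
  · obtain ⟨h, h2⟩ := σ.2.2
    refine ⟨h, ?_⟩
    have e : n - (n - 1 + 1) = 0 := by omega
    simpa [Fin.rev, e] using h2

/-- direct sum -/
def dsum {a b : ℕ} (π : Equiv.Perm (Fin a)) (ρ : Equiv.Perm (Fin b)) : Equiv.Perm (Fin (a + b)) :=
  finSumFinEquiv.permCongr (Equiv.Perm.sumCongr π ρ)

theorem dsum_left {a b : ℕ} (π : Equiv.Perm (Fin a)) (ρ : Equiv.Perm (Fin b)) (k : ℕ) (h : k < a) :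
    (dsum π ρ ⟨k, by omega⟩ : ℕ) = π ⟨k, h⟩ := by
  have e : (⟨k, by omega⟩ : Fin (a + b)) = finSumFinEquiv (Sum.inl ⟨k, h⟩) := by
    ext; simp
  rw [e, dsum, Equiv.permCongr_apply, Equiv.symm_apply_apply]
  simp

theorem dsum_right {a b : ℕ} (π : Equiv.Perm (Fin a)) (ρ : Equiv.Perm (Fin b)) (k : ℕ) (h : k < b) :
    (dsum π ρ ⟨a + k, by omega⟩ : ℕ) = a + ρ ⟨k, h⟩ := by
  have e : (⟨a + k, by omega⟩ : Fin (a + b)) = finSumFinEquiv (Sum.inr ⟨k, h⟩) := by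
    ext; simp
  rw [e, dsum, Equiv.permCongr_apply, Equiv.symm_apply_apply]
  simp

theorem dsum_injective {a b : ℕ} : Function.Injective
    (fun p : Equiv.Perm (Fin a) × Equiv.Perm (Fin b) => dsum p.1 p.2) := by
  rintro ⟨π, ρ⟩ ⟨π', ρ'⟩ h
  simp only at h
  have h1 : π = π' := by
    ext i
    have := dsum_left π ρ i i.2
    rw [h, dsum_left π' ρ' i i.2] at this
    exact this.symm
  have h2 : ρ = ρ' := by
    ext i
    have := dsum_right π ρ i i.2
    rw [h, dsum_right π' ρ' i i.2] at this
    have := Nat.add_left_cancel this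
    exact this.symm
  rw [h1, h2]

theorem exists_dsum {a b : ℕ} (σ : Equiv.Perm (Fin (a + b)))
    (h : ∀ k : Fin (a + b), (k : ℕ) < a → (σ k : ℕ) < a) :
    ∃ π ρ, dsum π ρ = σ := by
  have := Equiv.Perm.mem_sumCongrHom_range_of_perm_mapsTo_inl
    (σ := finSumFinEquiv.permCongr.symm σ) (m := Fin a) (n := Fin b) (by
      rintro _ ⟨i, rfl⟩
      refine ⟨⟨σ (finSumFinEquiv (Sum.inl i)), h _ (by simp)⟩, ?_⟩
      rw [← finSumFinEquiv.apply_eq_iff_eq]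
      ext
      simp)
  obtain ⟨⟨π, ρ⟩, h⟩ := this
  refine ⟨π, ρ, ?_⟩
  unfold dsum
  rw [← Equiv.eq_symm_apply, ← h]
  rfl

theorem king_dsum {a b : ℕ} (π : Equiv.Perm (Fin a)) (ρ : Equiv.Perm (Fin b)) (ha : 0 < a)
    (hρ : StartsMax ρ) :
    IsKing (dsum π ρ) ↔ IsKing π ∧ IsKing ρ ∧ ¬ (b = 1 ∧ EndsMax π) := by
  obtain ⟨hb, hm⟩ := hρ
  have e0 : a - 1 + 1 = a + 0 := by omega
  have hl := (π ⟨a - 1, by omega⟩).isLt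
  simp only [isKing_iff]
  constructor
  · intro H
    refine ⟨fun k h => ?_, fun k h => ?_, ?_⟩
    · have := H k (by omega)
      rwa [dsum_left _ _ k (by omega), dsum_left _ _ (k + 1) h] at this
    · have := H (a + k) (by omega)
      simp only [add_assoc] at this
      rw [dsum_right _ _ k (by omega), dsum_right _ _ (k + 1) h] at this
      omega
    · rintro ⟨hb1, _, h2⟩
      have := H (a - 1) (by omega)
      simp only [e0] at this
      rw [dsum_left _ _ _ (by omega), dsum_right _ _ 0 hb] at this
      omega
  · rintro ⟨h1, h2, h3⟩ k h
    rcases lt_trichotomy (k + 1) a with hk | hk | hk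
    · rw [dsum_left _ _ k (by omega), dsum_left _ _ (k + 1) hk]
      exact h1 k hk
    · obtain rfl : k = a - 1 := by omega
      simp only [e0]
      rw [dsum_left _ _ _ (by omega), dsum_right _ _ 0 hb]
      have : ¬ (b = 1 ∧ (π ⟨a - 1, by omega⟩ : ℕ) + 1 = a) := fun hh => h3 ⟨hh.1, ha, hh.2⟩
      omega
    · obtain ⟨l, rfl⟩ : ∃ l, k = a + l := ⟨k - a, by omega⟩
      simp only [add_assoc]
      rw [dsum_right _ _ l (by omega), dsum_right _ _ (l + 1) (by omega)]
      have := h2 l (by omega)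
      omega

/-- occurrence located at position `a` of the maximum -/
def Split {n : ℕ} (σ : Equiv.Perm (Fin n)) (a : ℕ) : Prop :=
  0 < a ∧ (∃ h : a < n, (σ ⟨a, h⟩ : ℕ) + 1 = n) ∧ ∀ k : Fin n, (k : ℕ) < a → (σ k : ℕ) < a

theorem Split.unique {n : ℕ} {σ : Equiv.Perm (Fin n)} {a b : ℕ} (h : Split σ a) (h' : Split σ b) :
    a = b := by
  obtain ⟨-, ⟨h1, h2⟩, -⟩ := h
  obtain ⟨-, ⟨h3, h4⟩, -⟩ := h'
  have : σ ⟨a, h1⟩ = σ ⟨b, h3⟩ := by ext; omega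
  simpa using σ.injective this

theorem Split.lt_iff {n : ℕ} {σ : Equiv.Perm (Fin n)} {a : ℕ} (h : Split σ a) (k : Fin n) :
    (σ k : ℕ) < a ↔ (k : ℕ) < a := by
  refine ⟨fun hk => ?_, h.2.2 k⟩
  classical
  have hs : (Finset.univ.filter (fun k : Fin n => (k : ℕ) < a)).image σ =
      Finset.univ.filter (fun k : Fin n => (k : ℕ) < a) := by
    apply Finset.eq_of_subset_of_card_le
    · intro x hx
      simp only [Finset.mem_image, Finset.mem_filter, Finset.mem_univ, true_and] at hx ⊢
      obtain ⟨y, hy, rfl⟩ := hx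
      exact h.2.2 y hy
    · rw [Finset.card_image_of_injective _ σ.injective]
  have : σ k ∈ (Finset.univ.filter (fun k : Fin n => (k : ℕ) < a)).image σ := by
    rw [hs]; simpa using hk
  simp only [Finset.mem_image, Finset.mem_filter, Finset.mem_univ, true_and] at this
  obtain ⟨y, hy, hy'⟩ := this
  rwa [← σ.injective hy']

theorem occ_iff {n : ℕ} (σ : Equiv.Perm (Fin n)) (i j : Fin n) :
    OccP σ i j ↔ Split σ j ∧ (σ i : ℕ) + 1 = j := by
  constructor
  · rintro ⟨hij, hv, h1, h2, h3⟩
    have hiff : ∀ k, σ k ≤ σ i ↔ k < j := by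
      intro k
      constructor
      · intro hk
        by_contra hn
        rcases eq_or_lt_of_le (not_lt.1 hn) with rfl | hlt
        · exact absurd hv (not_lt.2 hk)
        · exact absurd (h3 k hlt).1 (not_lt.2 hk)
      · intro hk
        rcases lt_trichotomy k i with hh | hh | hh
        · exact (h1 k hh).le
        · rw [hh]
        · exact (h2 k hh hk).le
    have hcard : (σ i : ℕ) + 1 = j := by
      rw [← Fin.card_Iic, ← Fin.card_Iio j]
      symm
      apply Finset.card_bij (fun k _ => σ k)
      · intro k hk
        simpa [hiff] using hk
      · intro k _ l _ h
        exact σ.injective h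
      · intro v hv
        refine ⟨σ.symm v, ?_, by simp⟩
        rw [Finset.mem_Iio, ← hiff]
        simpa using hv
    refine ⟨⟨by omega, ⟨j.2, ?_⟩, ?_⟩, hcard⟩
    · have hn : n - 1 < n := by have := j.2; omega
      have hall : ∀ k, σ k ≤ σ j := by
        intro k
        rcases lt_trichotomy k j with hh | hh | hh
        · exact ((hiff k).2 hh).trans hv.le
        · rw [hh]
        · exact (h3 k hh).2.le
      have h4 := hall (σ.symm ⟨n - 1, hn⟩)
      rw [Equiv.apply_symm_apply, Fin.le_def] at h4
      have := (σ j).isLt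
      simp only [Fin.eta] at h4 ⊢
      omega
    · intro k hk
      have := (hiff k).2 hk
      rw [Fin.le_def] at this
      omega
  · rintro ⟨hs, hi⟩
    have hiff := hs.lt_iff
    obtain ⟨h0, ⟨_, hm⟩, h2⟩ := hs
    simp only [Fin.eta] at hm
    have hij : i < j := by
      rw [Fin.lt_def, ← hiff i]; omega
    have hlt : ∀ k, k ≠ i → k < j → σ k < σ i := by
      intro k hk hkj
      have h5 : (σ k : ℕ) ≠ σ i := fun h => hk (σ.injective (Fin.ext h))
      have := h2 k hkj
      rw [Fin.lt_def]
      omega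
    refine ⟨hij, ?_, fun k hk => hlt k hk.ne (hk.trans hij), fun k hk hkj => hlt k hk.ne' hkj, ?_⟩
    · have := (hiff j).not.2 (lt_irrefl _)
      rw [Fin.lt_def]; omega
    · intro k hk
      have h6 := (hiff k).not.2 (by rw [Fin.lt_def] at hk; omega)
      have h5 : (σ k : ℕ) ≠ σ j := fun h => hk.ne' (σ.injective (Fin.ext h))
      have := (σ k).isLt
      rw [Fin.lt_def, Fin.lt_def]
      omega

open Classical in
theorem occP_eq {n : ℕ} (σ : Equiv.Perm (Fin n)) :
    occP σ = if ∃ a, Split σ a then 1 else 0 := by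
  unfold occP
  split_ifs with h
  · obtain ⟨a, ha⟩ := h
    obtain ⟨h0, ⟨h1, h2⟩, h3⟩ := id ha
    rw [Nat.card_eq_one_iff_unique]
    constructor
    · constructor
      rintro ⟨⟨i, j⟩, hp⟩ ⟨⟨i', j'⟩, hp'⟩
      rw [occ_iff] at hp hp'
      obtain ⟨hp, hq⟩ := hp
      obtain ⟨hp', hq'⟩ := hp'
      simp only at hp hq hp' hq'
      have e : j = j' := Fin.ext (hp.unique hp')
      subst e
      have e : i = i' := σ.injective (Fin.ext (by omega))
      subst e
      rfl
    · refine ⟨⟨⟨σ.symm ⟨a - 1, by omega⟩, ⟨a, h1⟩⟩, ?_⟩⟩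
      rw [occ_iff]
      refine ⟨ha, ?_⟩
      simp
      omega
  · rw [Nat.card_eq_zero]
    left
    constructor
    rintro ⟨⟨i, j⟩, hp⟩
    rw [occ_iff] at hp
    exact h ⟨_, hp.1⟩

noncomputable def splitCount (n a : ℕ) : ℕ :=
  Nat.card {σ : Equiv.Perm (Fin n) // IsKing σ ∧ Split σ a}

theorem splitCount_zero (n : ℕ) : splitCount n 0 = 0 := by
  unfold splitCount
  rw [Nat.card_eq_zero]
  left
  constructor
  rintro ⟨σ, -, h, -⟩
  omega

theorem kingCount_zero : kingCount 0 = 1 := by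
  have := startCount_succ 0
  unfold kingCount
  rw [Nat.card_eq_one_iff_unique]
  refine ⟨⟨fun a b => Subtype.ext (Subsingleton.elim _ _)⟩, ⟨1, fun i => i.elim0⟩⟩

theorem split_dsum {a b : ℕ} (π : Equiv.Perm (Fin a)) (ρ : Equiv.Perm (Fin b)) (ha : 0 < a) :
    Split (dsum π ρ) a ↔ StartsMax ρ := by
  constructor
  · rintro ⟨-, ⟨h, h1⟩, -⟩
    refine ⟨by omega, ?_⟩
    have := dsum_right π ρ 0 (by omega)
    simp only [add_zero] at this
    omega
  · rintro ⟨h, h1⟩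
    refine ⟨ha, ⟨by omega, ?_⟩, ?_⟩
    · have := dsum_right π ρ 0 (by omega)
      simp only [add_zero] at this
      omega
    · intro k hk
      have := dsum_left π ρ k hk
      simp only [Fin.eta] at this
      rw [this]
      exact Fin.isLt _

theorem splitCount_pos (a b : ℕ) (ha : 0 < a) :
    splitCount (a + b) a + (if b = 1 then startCount a else 0) = kingCount a * startCount b := by
  classical
  have h1 : splitCount (a + b) a = Nat.card
      {p : Equiv.Perm (Fin a) × Equiv.Perm (Fin b) //
        (IsKing p.1 ∧ IsKing p.2 ∧ StartsMax p.2) ∧ ¬ (b = 1 ∧ EndsMax p.1)} := by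
    symm
    unfold splitCount
    refine Nat.card_congr (Equiv.ofBijective (fun p => ⟨dsum p.1.1 p.1.2, ?_, ?_⟩) ⟨?_, ?_⟩)
    · exact (king_dsum _ _ ha p.2.1.2.2).2 ⟨p.2.1.1, p.2.1.2.1, p.2.2⟩
    · exact (split_dsum _ _ ha).2 p.2.1.2.2
    · intro p q hpq
      exact Subtype.ext (dsum_injective (congrArg Subtype.val hpq))
    · rintro ⟨σ, hk, hs⟩
      obtain ⟨π, ρ, rfl⟩ := exists_dsum σ hs.2.2
      have hr := (split_dsum _ _ ha).1 hs
      have hk' := (king_dsum _ _ ha hr).1 hk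
      exact ⟨⟨(π, ρ), ⟨hk'.1, hk'.2.1, hr⟩, hk'.2.2⟩, rfl⟩
  have h2 : kingCount a * startCount b = Nat.card
      {p : Equiv.Perm (Fin a) × Equiv.Perm (Fin b) //
        (IsKing p.1 ∧ IsKing p.2 ∧ StartsMax p.2)} := by
    unfold kingCount startCount
    rw [← Nat.card_prod]
    exact Nat.card_congr (Equiv.subtypeProdEquivProd (p := fun π : Equiv.Perm (Fin a) => IsKing π)
      (q := fun ρ : Equiv.Perm (Fin b) => IsKing ρ ∧ StartsMax ρ)).symm
  have h3 : (if b = 1 then startCount a else 0) = Nat.card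
      {p : Equiv.Perm (Fin a) × Equiv.Perm (Fin b) //
        (IsKing p.1 ∧ IsKing p.2 ∧ StartsMax p.2) ∧ (b = 1 ∧ EndsMax p.1)} := by
    split_ifs with hb
    · subst hb
      rw [← card_ends]
      have hone : IsKing (1 : Equiv.Perm (Fin 1)) := fun i h => by omega
      refine Nat.card_congr
        { toFun := fun p => ⟨(p.1, 1), ⟨p.2.1, hone, by omega, by simp⟩, rfl, p.2.2⟩
          invFun := fun p => ⟨p.1.1, p.2.1.1, p.2.2.2⟩
          left_inv := fun p => rfl
          right_inv := fun p => Subtype.ext (Prod.ext rfl (Subsingleton.elim _ _)) }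
    · symm
      rw [Nat.card_eq_zero]
      left
      constructor
      rintro ⟨p, -, h, -⟩
      exact hb h
  rw [h1, h2, h3]
  simp only [Nat.card_eq_fintype_card, Fintype.card_subtype]
  rw [add_comm]
  conv_lhs => rw [← Finset.filter_filter, ← Finset.filter_filter (fun p : Equiv.Perm (Fin a) × Equiv.Perm (Fin b) => (IsKing p.1 ∧ IsKing p.2 ∧ StartsMax p.2))]
  rw [Finset.card_filter_add_card_filter_not]

theorem splitCount_all (a b : ℕ) :
    splitCount (a + b) a + (if b = 1 then startCount a else 0) + (if a = 0 then startCount b else 0)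
      = kingCount a * startCount b := by
  rcases Nat.eq_zero_or_pos a with rfl | ha
  · simp [splitCount_zero, kingCount_zero, startCount_zero]
  · rw [← splitCount_pos a b ha, if_neg ha.ne', add_zero]

open Classical in
theorem coeff_E (n : ℕ) : PowerSeries.coeff n Etu =
    (kingCount n : Polynomial ℚ) - (1 - Polynomial.X) *
      ((∑ p ∈ Finset.HasAntidiagonal.antidiagonal n, splitCount (p.1 + p.2) p.1 : ℕ) : Polynomial ℚ) := by
  have h1 : (∑ p ∈ Finset.HasAntidiagonal.antidiagonal n, splitCount (p.1 + p.2) p.1) =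
      (Finset.univ.filter (fun σ : Equiv.Perm (Fin n) => IsKing σ ∧ ∃ a, Split σ a)).card := by
    rw [Finset.sum_congr rfl (g := fun p => splitCount n p.1)
      (fun p hp => by rw [Finset.HasAntidiagonal.mem_antidiagonal.1 hp])]
    rw [Finset.Nat.sum_antidiagonal_eq_sum_range_succ_mk]
    simp only [splitCount, Nat.card_eq_fintype_card, Fintype.card_subtype]
    rw [← Finset.card_biUnion]
    · congr 1
      ext σ
      simp only [Finset.mem_biUnion, Finset.mem_range, Finset.mem_filter, Finset.mem_univ, true_and]
      constructor
      · rintro ⟨a, -, h, h'⟩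
        exact ⟨h, a, h'⟩
      · rintro ⟨h, a, h'⟩
        obtain ⟨hlt, -⟩ := h'.2.1
        exact ⟨a, by omega, h, h'⟩
    · intro a _ b _ hab
      rw [Function.onFun, Finset.disjoint_left]
      intro σ hσ hσ'
      simp only [Finset.mem_filter, Finset.mem_univ, true_and] at hσ hσ'
      exact hab (hσ.2.unique hσ'.2)
  rw [h1]
  unfold Etu kingCount
  rw [PowerSeries.coeff_mk]
  simp only [Nat.card_eq_fintype_card, Fintype.card_subtype]
  rw [Finset.card_filter, Finset.card_filter, Nat.cast_sum, Nat.cast_sum, Finset.mul_sum,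
    ← Finset.sum_sub_distrib]
  refine Finset.sum_congr rfl fun σ _ => ?_
  rw [occP_eq]
  by_cases hk : IsKing σ <;> by_cases hs : ∃ a, Split σ a <;> simp [hk, hs]

noncomputable def startB : PowerSeries (Polynomial ℚ) :=
  PowerSeries.mk fun n => (startCount n : Polynomial ℚ)

noncomputable def splitF : PowerSeries (Polynomial ℚ) :=
  PowerSeries.mk fun n =>
    ((∑ p ∈ Finset.HasAntidiagonal.antidiagonal n, splitCount (p.1 + p.2) p.1 : ℕ) : Polynomial ℚ)

theorem E_eq : Etu = kingAu - (1 - U) * splitF := by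
  ext1 n
  rw [coeff_E]
  have : (1 - U : PowerSeries (Polynomial ℚ)) = PowerSeries.C (R := Polynomial ℚ) (1 - Polynomial.X) := by
    simp [U]
  rw [this, map_sub, PowerSeries.coeff_C_mul]
  simp [kingAu, splitF]

theorem B_eq : startB + T * startB = T * kingAu := by
  ext1 n
  rcases n with _ | n
  · simp [T, startB, startCount_zero]
  · simp only [T, map_add, PowerSeries.coeff_succ_X_mul]
    simp only [startB, kingAu, PowerSeries.coeff_mk]
    exact_mod_cast startCount_succ n

theorem F_eq : splitF + T * startB + startB = kingAu * startB := by
  have hT : T * startB = startB * PowerSeries.mk fun n => if n = 1 then 1 else 0 := by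
    rw [mul_comm, T]
    congr 1
    ext1 n
    simp [PowerSeries.coeff_X]
  have hI : startB = (PowerSeries.mk fun n => if n = 0 then 1 else 0) * startB := by
    conv_lhs => rw [← one_mul startB]
    congr 1
    ext1 n
    simp [PowerSeries.coeff_one]
  rw [hT]
  conv_lhs => rw [add_comm]; lhs; rw [hI]
  ext1 n
  simp only [map_add, PowerSeries.coeff_mul, startB, kingAu, splitF, PowerSeries.coeff_mk]
  rw [Nat.cast_sum, ← Finset.sum_add_distrib, ← Finset.sum_add_distrib]
  refine Finset.sum_congr rfl fun p _ => ?_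
  have := splitCount_all p.1 p.2
  rw [← Nat.cast_mul, ← this]
  push_cast
  split_ifs <;> ring

theorem statement_9 :
    (1 + T) * Etu
      = ((1 + T) * (1 + T - U * T) - T * (1 - U) * kingAu) * kingAu := by
  rw [E_eq]
  linear_combination (1 - U) * (1 + T - kingAu) * B_eq - (1 - U) * (1 + T) * F_eq
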